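/- arXiv:2002.05156 — 7 statements merged into one kernel-verified Lean document; each statement's English description precedes it below -/
import Mathlib

section
/- Let n_row, n_col, k be positive integers, let ε > 0 be real, let A be a matrix with entries A_{i,j} ∈ [−1,1] for i ∈ [n_row], j ∈ [n_col], and let x* ∈ Δ_{n_col}. If n_row · exp(−k·ε²/2) < 1, then there exists a k-uniform probability vector x̃ ∈ Δ_{n_col} such that (A x̃)_i > (A x*)_i − ε for every i ∈ [n_row]; in particular, |{i ∈ [n_row] : (A x̃)_i ≥ −ε}| ≥ |{i ∈ [n_row] : (A x*)_i ≥ 0}|. -/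
open Finset

/-- **Hoeffding's lemma** for a finitely supported distribution: if `a` takes values in `[-1, 1]`
then `∑ j, p j * a j - a` has moment generating function at most `exp (t ^ 2 / 2)`. -/
theorem sum_mul_exp_mean_sub_le {ι : Type*} [Fintype ι] {p a : ι → ℝ}
    (hp0 : ∀ j, 0 ≤ p j) (hp1 : ∑ j, p j = 1) (ha : ∀ j, a j ∈ Set.Icc (-1 : ℝ) 1) (t : ℝ) :
    ∑ j, p j * Real.exp (t * (∑ l, p l * a l - a j)) ≤ Real.exp (t ^ 2 / 2) := by
  let _ : MeasurableSpace ι := ⊤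
  let P : PMF ι := PMF.ofFintype (fun j => ENNReal.ofReal (p j)) (by
    rw [← ENNReal.ofReal_sum_of_nonneg fun j _ => hp0 j, hp1, ENNReal.ofReal_one])
  have integral_eq (f : ι → ℝ) : ∫ j, f j ∂P.toMeasure = ∑ j, p j * f j := by
    simp [PMF.integral_eq_sum, P, hp0]
  have h := ((ProbabilityTheory.hasSubgaussianMGF_of_mem_Icc (μ := P.toMeasure) (X := a)
    measurable_from_top.aemeasurable (Filter.Eventually.of_forall ha)).neg).mgf_le t
  simp only [ProbabilityTheory.mgf, integral_eq, Pi.neg_apply, neg_sub] at h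
  refine h.trans_eq ?_
  norm_num

/-- The expectation over `k` independent samples of a product is the product of expectations. -/
theorem sum_prod_mul_exp_sum {ι : Type*} [Fintype ι] (k : ℕ) (p g : ι → ℝ) :
    ∑ f : Fin k → ι, (∏ l, p (f l)) * Real.exp (∑ l, g (f l)) =
      (∑ j, p j * Real.exp (g j)) ^ k := by
  classical
  simp_rw [Real.exp_sum, ← Finset.prod_mul_distrib]
  rw [← Fin.prod_const, Finset.prod_univ_sum, Fintype.piFinset_univ]

/-- Some sequence of `k` samples has all row averages of `A` within `ε` below their expectation. -/
theorem exists_samples_sum_mean_sub_lt {ι κ : Type*} [Fintype ι] [Fintype κ] (k : ℕ)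
    {ε : ℝ} (hε : 0 < ε) {A : κ → ι → ℝ} (hA : ∀ i j, A i j ∈ Set.Icc (-1 : ℝ) 1)
    {p : ι → ℝ} (hp0 : ∀ j, 0 ≤ p j) (hp1 : ∑ j, p j = 1)
    (hsmall : (Fintype.card κ : ℝ) * Real.exp (-(k : ℝ) * ε ^ 2 / 2) < 1) :
    ∃ f : Fin k → ι, ∀ i, ∑ l, (∑ j, p j * A i j - A i (f l)) < k * ε := by
  by_contra! hbad
  have lower (f : Fin k → ι) : Real.exp (k * ε ^ 2) ≤
      ∑ i, Real.exp (∑ l, ε * (∑ j, p j * A i j - A i (f l))) := by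
    obtain ⟨i, hi⟩ := hbad f
    refine le_trans ?_ (Finset.single_le_sum (fun i _ => (Real.exp_pos _).le) (mem_univ i))
    rw [Real.exp_le_exp, ← Finset.mul_sum]
    nlinarith
  have weights : ∑ f : Fin k → ι, ∏ l, p (f l) = 1 := by
    classical
    rw [← Fintype.piFinset_univ, ← Finset.prod_univ_sum, hp1, Finset.prod_const_one]
  have key : Real.exp (k * ε ^ 2) ≤ Fintype.card κ * Real.exp (k * (ε ^ 2 / 2)) := calc
    Real.exp (k * ε ^ 2)
      = ∑ f : Fin k → ι, (∏ l, p (f l)) * Real.exp (k * ε ^ 2) := by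
        rw [← Finset.sum_mul, weights, one_mul]
    _ ≤ ∑ f : Fin k → ι, (∏ l, p (f l)) *
          ∑ i, Real.exp (∑ l, ε * (∑ j, p j * A i j - A i (f l))) :=
        Finset.sum_le_sum fun f _ =>
          mul_le_mul_of_nonneg_left (lower f) (Finset.prod_nonneg fun l _ => hp0 _)
    _ = ∑ i, (∑ j, p j * Real.exp (ε * (∑ l, p l * A i l - A i j))) ^ k := by
        simp_rw [Finset.mul_sum (s := (univ : Finset κ))]
        rw [Finset.sum_comm]
        exact Finset.sum_congr rfl fun i _ =>
          sum_prod_mul_exp_sum k p fun j => ε * (∑ l, p l * A i l - A i j)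
    _ ≤ ∑ _i : κ, Real.exp (ε ^ 2 / 2) ^ k :=
        Finset.sum_le_sum fun i _ => pow_le_pow_left₀
          (Finset.sum_nonneg fun j _ => mul_nonneg (hp0 j) (Real.exp_pos _).le)
          (sum_mul_exp_mean_sub_le hp0 hp1 (hA i) ε) k
    _ = Fintype.card κ * Real.exp (k * (ε ^ 2 / 2)) := by
        rw [Finset.sum_const, card_univ, nsmul_eq_mul, Real.exp_nat_mul]
  have hsplit : Real.exp (k * (ε ^ 2 / 2)) =
      Real.exp (k * ε ^ 2) * Real.exp (-(k : ℝ) * ε ^ 2 / 2) := by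
    rw [← Real.exp_add]
    ring_nf
  rw [hsplit] at key
  nlinarith [Real.exp_pos (k * ε ^ 2)]

/-- core of Theorem 4, `th:mssi_upper`.
Any probability vector `xs` on the simplex can be replaced by a `k`-uniform probability
vector `xt` (each coordinate an integer multiple of `1/k`) while decreasing each
coordinate of `A x` by less than `ε`, provided `n_row · exp(−k ε²/2) < 1`.
In particular, the number of rows with `(A xt)_i ≥ −ε` is at least the number of rows
with `(A xs)_i ≥ 0`. -/
theorem kUniform_approximation
    (n_row n_col k : ℕ) (hrow : 0 < n_row) (hcol : 0 < n_col) (hk : 0 < k)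
    (ε : ℝ) (hε : 0 < ε)
    (A : Fin n_row → Fin n_col → ℝ)
    (hA : ∀ i j, A i j ∈ Set.Icc (-1 : ℝ) 1)
    (xs : Fin n_col → ℝ) (hxs0 : ∀ j, 0 ≤ xs j) (hxs1 : ∑ j, xs j = 1)
    (hsmall : (n_row : ℝ) * Real.exp (-(k : ℝ) * ε ^ 2 / 2) < 1) :
    ∃ xt : Fin n_col → ℝ,
      (∀ j, 0 ≤ xt j) ∧ (∑ j, xt j = 1) ∧
      (∀ j, ∃ m : ℕ, xt j = (m : ℝ) / k) ∧
      (∀ i, ∑ j, A i j * xt j > (∑ j, A i j * xs j) - ε) ∧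
      (Finset.univ.filter fun i : Fin n_row => 0 ≤ ∑ j, A i j * xs j).card ≤
        (Finset.univ.filter fun i : Fin n_row => -ε ≤ ∑ j, A i j * xt j).card := by
  obtain ⟨f, hf⟩ := exists_samples_sum_mean_sub_lt k hε hA hxs0 hxs1 (by simpa using hsmall)
  have hk' : (0 : ℝ) < k := by exact_mod_cast hk
  have row_avg (a : Fin n_col → ℝ) :
      ∑ j, a j * (((univ.filter fun l => f l = j).card : ℝ) / k) = (∑ l, a (f l)) / k := by
    rw [← Finset.sum_fiberwise univ f fun l => a (f l), Finset.sum_div]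
    refine Finset.sum_congr rfl fun j _ => ?_
    rw [Finset.sum_congr rfl fun l hl => congrArg a (mem_filter.mp hl).2, Finset.sum_const,
      nsmul_eq_mul]
    ring
  have close (i : Fin n_row) : ∑ j, A i j * xs j - ε <
      ∑ j, A i j * (((univ.filter fun l => f l = j).card : ℝ) / k) := by
    have h := hf i
    rw [Finset.sum_sub_distrib, Finset.sum_const, card_univ, Fintype.card_fin, nsmul_eq_mul] at h
    simp_rw [mul_comm (xs _)] at h
    rw [row_avg, lt_div_iff₀ hk']
    linarith
  refine ⟨fun j => ((univ.filter fun l => f l = j).card : ℝ) / k, fun j => by positivity, ?_,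
    fun j => ⟨_, rfl⟩, close, Finset.card_le_card fun i hi => ?_⟩
  · simpa [hk'.ne'] using row_avg fun _ => 1
  · simp only [mem_filter, mem_univ, true_and] at hi ⊢
    linarith [close i]
end

section
/- Let n be a positive even integer, let v ∈ Δ_n be a probability vector, and let c > 0. If Σ_{i=1}^n |v_i − 1/n| > c, then there exists a subset I ⊆ [n] with |I| = n/2 such that Σ_{i∈I} v_i > 1/2 + c/4. -/
open Finset

/-- Some `m`-element set consists of the `m` largest values of `f`, separated from the other values
by a threshold. -/
lemma exists_card_eq_threshold {ι : Type*} [Fintype ι] [DecidableEq ι] (f : ι → ℝ) {m : ℕ}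
    (hm : 0 < m) (hcard : m ≤ Fintype.card ι) :
    ∃ (I : Finset ι) (t : ℝ), I.card = m ∧ (∀ i ∈ I, t ≤ f i) ∧ ∀ j ∉ I, f j ≤ t := by
  obtain ⟨I, hI, hmax⟩ := (powersetCard m (univ : Finset ι)).exists_max_image
    (fun I => ∑ i ∈ I, f i) (powersetCard_nonempty.2 hcard)
  have hIcard : I.card = m := (mem_powersetCard.1 hI).2
  obtain ⟨k, hk, hmin⟩ := I.exists_min_image f (card_pos.1 (hIcard ▸ hm))
  refine ⟨I, f k, hIcard, hmin, fun j hj => ?_⟩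
  have hj' : j ∉ I.erase k := fun h => hj (mem_of_mem_erase h)
  have hswap := hmax (insert j (I.erase k)) <| mem_powersetCard.2
    ⟨subset_univ _, by rw [card_insert_of_notMem hj', card_erase_add_one hk, hIcard]⟩
  rw [sum_insert hj', ← add_sum_erase I f hk] at hswap
  linarith

/-- A real vector of total sum zero has a half of its coordinates whose sum is at least a quarter
of its `ℓ₁` norm. -/
lemma exists_half_sum_abs_le {ι : Type*} [Fintype ι] [DecidableEq ι] (w : ι → ℝ) {m : ℕ}
    (hm : 0 < m) (hcard : Fintype.card ι = 2 * m) (hw : ∑ i, w i = 0) :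
    ∃ I : Finset ι, I.card = m ∧ ∑ i, |w i| ≤ 4 * ∑ i ∈ I, w i := by
  obtain ⟨I, t, hI, hge, hle⟩ := exists_card_eq_threshold w hm (by lia)
  refine ⟨I, hI, ?_⟩
  have hIc : Iᶜ.card = m := by rw [card_compl]; lia
  have hsum := sum_add_sum_compl I w
  have habs := sum_add_sum_compl I fun i => |w i|
  have hlow := I.card_nsmul_le_sum w t hge
  have hupp := Iᶜ.sum_le_card_nsmul w t fun j hj => hle j (mem_compl.1 hj)
  have hpos : ∑ i ∈ I, |w i| ≤ ∑ i ∈ I, (w i + (|t| - t)) := sum_le_sum fun i hi => by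
    have := hge i hi
    grind
  have hneg : ∑ i ∈ Iᶜ, |w i| ≤ ∑ i ∈ Iᶜ, (-w i + (|t| + t)) := sum_le_sum fun i hi => by
    have := hle i (mem_compl.1 hi)
    grind
  simp only [sum_add_distrib, sum_neg_distrib, sum_const, nsmul_eq_mul, hI, hIc]
    at hpos hneg hlow hupp
  have ht : (m : ℝ) * |t| ≤ ∑ i ∈ I, w i := by
    rcases abs_choice t with h | h <;> rw [h] <;> linarith
  linarith

/-- Lemma 6, `lemma:deviation_from_uniform`.
A probability vector on `[n]` (with `n` even) that is more than `c`-far in `ℓ₁`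
norm from the uniform vector must put mass more than `1/2 + c/4` on some half of
the coordinates. -/
theorem deviation_from_uniform
    (n : ℕ) (hn : 0 < n) (hne : Even n)
    (v : Fin n → ℝ) (hv0 : ∀ i, 0 ≤ v i) (hv1 : ∑ i, v i = 1)
    (c : ℝ) (hc : 0 < c)
    (hfar : ∑ i, |v i - 1 / (n : ℝ)| > c) :
    ∃ I : Finset (Fin n), 2 * I.card = n ∧ (∑ i ∈ I, v i) > 1 / 2 + c / 4 := by
  obtain ⟨m, rfl⟩ := hne.two_dvd
  have hm : 0 < m := by lia
  have hm' : (m : ℝ) ≠ 0 := by positivity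
  obtain ⟨I, hI, hsum⟩ := exists_half_sum_abs_le (fun i => v i - 1 / ((2 * m : ℕ) : ℝ)) hm
    (Fintype.card_fin _) (by
      simp only [sum_sub_distrib, hv1, sum_const, card_univ, Fintype.card_fin, nsmul_eq_mul]
      push_cast
      field_simp
      ring)
  refine ⟨I, by rw [hI], ?_⟩
  have hunif : (m : ℝ) * (1 / ((2 * m : ℕ) : ℝ)) = 1 / 2 := by
    push_cast
    field_simp
  rw [sum_sub_distrib, sum_const, hI, nsmul_eq_mul, hunif] at hsum
  linarith
end

section
/- Let m be a positive even integer, let ε be a real number with 0 < ε ≤ 1/8, and let x : [m] → ℝ_{≥0} be nonnegative weights whose total mass s := Σ_{j=1}^m x_j satisfies 1/2 − ε ≤ s ≤ 1/2 + ε. If Σ_{j=1}^m |x_j/s − 1/m| > 16ε, then there exists a subset T ⊆ [m] with |T| = m/2 such that Σ_{j∉T} x_j − Σ_{j∈T} x_j < −ε. -/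
open Finset

/-- A real family indexed by a nonempty set of even size has a median: a threshold `t`
separating the upper half `T` of the indices from the lower half. -/
lemma exists_median_half {m : ℕ} (hm : 0 < m) (hme : Even m) (x : Fin m → ℝ) :
    ∃ (T : Finset (Fin m)) (t : ℝ), 2 * T.card = m ∧
      (∀ j ∈ T, t ≤ x j) ∧ ∀ j ∈ Tᶜ, x j ≤ t := by
  obtain ⟨k, hk⟩ := hme
  have hkm : k < m := by omega
  have hmono : Monotone (x ∘ Tuple.sort x) := Tuple.monotone_sort x
  refine ⟨(Ici (⟨k, hkm⟩ : Fin m)).map (Tuple.sort x).toEmbedding,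
    x (Tuple.sort x ⟨k, hkm⟩), ?_, ?_, ?_⟩
  · rw [card_map, Fin.card_Ici]
    change 2 * (m - k) = m
    omega
  · intro j hj
    obtain ⟨i, hi, rfl⟩ := mem_map.1 hj
    exact hmono (mem_Ici.1 hi)
  · intro j hj
    obtain ⟨i, rfl⟩ := (Tuple.sort x).surjective j
    refine hmono (le_of_not_ge fun hi => mem_compl.1 hj ?_)
    exact mem_map.2 ⟨i, mem_Ici.2 hi, rfl⟩

/-- If `T` is a half of the indices lying above the threshold `t`, and its complement lies
below, then the difference of the two partial sums is the `ℓ₁` distance to `t`. -/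
lemma sum_abs_sub_eq_of_half {m : ℕ} {x : Fin m → ℝ} {T : Finset (Fin m)} {t : ℝ}
    (hcard : 2 * T.card = m) (hT : ∀ j ∈ T, t ≤ x j) (hTc : ∀ j ∈ Tᶜ, x j ≤ t) :
    ∑ j, |x j - t| = ∑ j ∈ T, x j - ∑ j ∈ Tᶜ, x j := by
  have hcompl : Tᶜ.card = T.card := by
    rw [card_compl, Fintype.card_fin]
    omega
  rw [← sum_add_sum_compl T,
    sum_congr rfl fun j hj => abs_of_nonneg (sub_nonneg.2 (hT j hj)),
    sum_congr rfl fun j hj => abs_of_nonpos (sub_nonpos.2 (hTc j hj))]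
  simp only [sum_neg_distrib, sum_sub_distrib, sum_const, hcompl]
  ring

/-- The `ℓ₁` distance to the mean is at most twice the `ℓ₁` distance to any constant. -/
lemma sum_abs_sub_mean_le {m : ℕ} (hm : 0 < m) (x : Fin m → ℝ) (t : ℝ) :
    ∑ j, |x j - (∑ i, x i) / m| ≤ 2 * ∑ j, |x j - t| := by
  have hm' : (0 : ℝ) < m := by exact_mod_cast hm
  have hmean : m * |t - (∑ i, x i) / m| ≤ ∑ j, |x j - t| := by
    calc m * |t - (∑ i, x i) / m| = |∑ j, (x j - t)| := by
          rw [← abs_of_pos hm', ← abs_mul, abs_of_pos hm', mul_sub,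
            mul_div_cancel₀ _ hm'.ne', abs_sub_comm]
          simp
      _ ≤ ∑ j, |x j - t| := abs_sum_le_sum_abs _ _
  calc ∑ j, |x j - (∑ i, x i) / m|
      ≤ ∑ j, (|x j - t| + |t - (∑ i, x i) / m|) :=
        sum_le_sum fun j _ => abs_sub_le _ _ _
    _ = ∑ j, |x j - t| + m * |t - (∑ i, x i) / m| := by simp [sum_add_distrib]
    _ ≤ 2 * ∑ j, |x j - t| := by linarith

/-- Lemma 7, `lemma:almost_uniform_1`, abstract form.
If nonnegative weights `x` on `[m]` (with `m` even) have total mass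
`s ∈ [1/2 − ε, 1/2 + ε]` and the normalized weights deviate from the uniform
distribution by more than `16ε` in `ℓ₁` norm, then there is a subset `T` of
cardinality `m/2` such that `∑_{j∉T} x j − ∑_{j∈T} x j < −ε`. -/
theorem almost_uniform
    (m : ℕ) (hm : 0 < m) (hme : Even m)
    (ε : ℝ) (hε0 : 0 < ε) (hε8 : ε ≤ 1 / 8)
    (x : Fin m → ℝ) (hx : ∀ j, 0 ≤ x j)
    (s : ℝ) (hs : s = ∑ j, x j)
    (hs1 : 1 / 2 - ε ≤ s) (hs2 : s ≤ 1 / 2 + ε)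
    (hfar : ∑ j, |x j / s - 1 / (m : ℝ)| > 16 * ε) :
    ∃ T : Finset (Fin m), 2 * T.card = m ∧
      (∑ j ∈ Tᶜ, x j) - (∑ j ∈ T, x j) < -ε := by
  obtain ⟨T, t, hcard, hT, hTc⟩ := exists_median_half hm hme x
  refine ⟨T, hcard, ?_⟩
  have hs0 : 0 < s := by linarith
  have hscale : ∑ j, |x j - s / m| = s * ∑ j, |x j / s - 1 / (m : ℝ)| := by
    rw [mul_sum]
    refine sum_congr rfl fun j _ => ?_
    rw [← abs_of_pos hs0, ← abs_mul, abs_of_pos hs0, mul_sub, mul_div_cancel₀ _ hs0.ne',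
      mul_one_div]
  have hmean := sum_abs_sub_mean_le hm x t
  rw [← hs, hscale, sum_abs_sub_eq_of_half hcard hT hTc] at hmean
  have hlarge := mul_lt_mul_of_pos_left hfar hs0
  have hsε : 3 / 8 * ε ≤ s * ε := mul_le_mul_of_nonneg_right (by linarith) hε0.le
  linarith
end

section
/- Let n be a positive integer and let x : [n] × {0,1} → ℝ_{≥0} satisfy x(j,0) + x(j,1) = 1/n for every j ∈ [n]. For a binary string c ∈ {0,1}^n define f(c) = Σ_{j=1}^n x(j, c_j). Then for all c', c'' ∈ {0,1}^n one has f(c') + f(c'') ≤ 2 − d_H(c', c'')/n, where d_H denotes Hamming distance. Consequently, if d_H(c', c'') ≥ n/5 and 0 < ε < 1/200, then it cannot hold that both f(c') ≥ 1 − 20ε and f(c'') ≥ 1 − 20ε. -/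
open Finset

/-- combinatorial core of Lemma 10, `lemma:at_most_one_row`.
If `x` splits mass `1/n` between the two possible values of each bit `j`, and
`f c = ∑_j x j (c j)` measures the agreement of a binary string `c` with this
fractional assignment, then `f c' + f c'' ≤ 2 − d_H(c',c'')/n`; consequently,
if `d_H(c',c'') ≥ n/5` and `0 < ε < 1/200`, then `f c' ≥ 1 − 20ε` and
`f c'' ≥ 1 − 20ε` cannot both hold. -/
theorem at_most_one_codeword
    (n : ℕ) (hn : 0 < n)
    (x : Fin n → Bool → ℝ) (hx : ∀ j b, 0 ≤ x j b)
    (hsum : ∀ j, x j false + x j true = 1 / (n : ℝ)) :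
    (∀ c' c'' : Fin n → Bool,
      (∑ j, x j (c' j)) + (∑ j, x j (c'' j)) ≤
        2 - (hammingDist c' c'' : ℝ) / n) ∧
    (∀ c' c'' : Fin n → Bool, ∀ ε : ℝ,
      (hammingDist c' c'' : ℝ) ≥ (n : ℝ) / 5 → 0 < ε → ε < 1 / 200 →
      ¬((∑ j, x j (c' j)) ≥ 1 - 20 * ε ∧ (∑ j, x j (c'' j)) ≥ 1 - 20 * ε)) := by
  have hn' : (0 : ℝ) < n := by exact_mod_cast hn
  have agreement_add_le : ∀ c' c'' : Fin n → Bool,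
      (∑ j, x j (c' j)) + (∑ j, x j (c'' j)) ≤ 2 - (hammingDist c' c'' : ℝ) / n := by
    intro c' c''
    have hterm : ∀ j, x j (c' j) + x j (c'' j) ≤
        2 * (1 / (n : ℝ)) - (if c' j ≠ c'' j then (1 : ℝ) else 0) * (1 / n) := by
      intro j
      have h₀ := hx j false
      have h₁ := hx j true
      rw [← hsum j]
      cases c' j <;> cases c'' j <;> simp <;> linarith
    have hdist : (hammingDist c' c'' : ℝ) = ∑ j, if c' j ≠ c'' j then (1 : ℝ) else 0 := by
      rw [hammingDist, sum_boole]
    calc (∑ j, x j (c' j)) + (∑ j, x j (c'' j))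
        = ∑ j, (x j (c' j) + x j (c'' j)) := sum_add_distrib.symm
      _ ≤ ∑ j, (2 * (1 / (n : ℝ)) - (if c' j ≠ c'' j then (1 : ℝ) else 0) * (1 / n)) :=
          sum_le_sum fun j _ => hterm j
      _ = 2 - (hammingDist c' c'' : ℝ) / n := by
          rw [sum_sub_distrib, ← sum_mul, ← sum_mul, ← hdist, sum_const, card_univ, Fintype.card_fin,
            nsmul_eq_mul]
          field_simp
  refine ⟨agreement_add_le, ?_⟩
  rintro c' c'' ε hd - hε ⟨h', h''⟩
  have hle := agreement_add_le c' c''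
  have hfrac : (1 : ℝ) / 5 ≤ (hammingDist c' c'' : ℝ) / n := by
    rw [le_div_iff₀ hn']
    linarith
  linarith
end

section
/- Let G be a bipartite graph with vertex set V = U ∪ W (U and W disjoint independent sets), |V| = n where n = m² for a positive integer m, every vertex of degree at most d, and |U| = c·n, |W| = (1−c)·n for some c ∈ [0,1]. Then there exist a partition of U into m (possibly empty) sets S₁,…,S_m and a partition of W into m (possibly empty) sets T₁,…,T_m such that |S_i| ≤ 2m and |T_j| ≤ 2m for all i, j, and for all i, j the number of edges of G with one endpoint in S_i and the other in T_j is at most 2d². -/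
open Finset

/-- Greedy colouring: items `w` with weight vectors `a · w` of total at most `d` can be put into `m`
bins so that each bin holds at most `2 * m` items and at most `2 * d ^ 2` of every weight. -/
theorem exists_balanced_coloring {ι α : Type*} [Fintype ι] [DecidableEq α] (a : ι → α → ℕ)
    {d m : ℕ} (hm : 0 < m) (W : Finset α) (hW : #W ≤ m * m)
    (hrow : ∀ w ∈ W, ∑ i, a i w ≤ d) (hcol : ∀ i, ∑ w ∈ W, a i w ≤ m * d) :
    ∃ g : α → Fin m, ∀ j, #{w ∈ W | g w = j} ≤ 2 * m ∧
      ∀ i, ∑ w ∈ W with g w = j, a i w ≤ 2 * d ^ 2 := by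
  induction W using Finset.induction_on with
  | empty => exact ⟨fun _ => ⟨0, hm⟩, by simp⟩
  | insert w A hwA ih =>
    rw [card_insert_of_notMem hwA] at hW
    simp only [sum_insert hwA] at hcol
    obtain ⟨g, hg⟩ := ih (by omega) (fun v hv => hrow v (mem_insert_of_mem hv))
      (fun i => (Nat.le_add_left _ _).trans (hcol i))
    have hw : ∑ i, a i w ≤ d := hrow w (mem_insert_self w A)
    have hcard : ∑ j, #{v ∈ A | g v = j} = #A :=
      (card_eq_sum_card_fiberwise fun _ _ => mem_coe.2 (mem_univ _)).symm
    obtain ⟨j, hj, hij⟩ : ∃ j, #{v ∈ A | g v = j} < 2 * m ∧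
        ∀ i, a i w + ∑ v ∈ A with g v = j, a i v ≤ 2 * d ^ 2 := by
      by_contra! hbad
      have hle (i : ι) : a i w ≤ d :=
        (single_le_sum (f := fun i => a i w) (fun _ _ => Nat.zero_le _) (mem_univ i)).trans hw
      rcases Nat.eq_zero_or_pos d with rfl | hd
      · have hfull (j : Fin m) : 2 * m ≤ #{v ∈ A | g v = j} := by
          by_contra! hlt
          obtain ⟨i, hi⟩ := hbad j hlt
          have := (hg j).2 i
          have := hle i
          omega
        have := sum_le_sum fun j (_ : j ∈ univ) => hfull j
        simp only [sum_const, card_univ, Fintype.card_fin, smul_eq_mul, hcard] at this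
        nlinarith
      · have hweight (j : Fin m) : 2 * m * d ^ 2 ≤ #{v ∈ A | g v = j} * d ^ 2 +
            m * ∑ i, a i w * ∑ v ∈ A with g v = j, a i v := by
          rcases le_or_gt (2 * m) #{v ∈ A | g v = j} with hfull | hlt
          · exact (Nat.mul_le_mul_right _ hfull).trans (Nat.le_add_right _ _)
          · obtain ⟨i, hi⟩ := hbad j hlt
            have hE := (hg j).2 i
            have hai := hle i
            have hterm : 2 * d ^ 2 ≤ a i w * ∑ v ∈ A with g v = j, a i v := by
              generalize ∑ v ∈ A with g v = j, a i v = E at *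
              generalize a i w = x at *
              obtain ⟨y, rfl⟩ : ∃ y, x = y + 1 := ⟨x - 1, by omega⟩
              have hyE : y + 1 ≤ E := by nlinarith
              nlinarith [Nat.mul_le_mul_left y hyE]
            have hsum := single_le_sum
              (f := fun i => a i w * ∑ v ∈ A with g v = j, a i v)
              (fun _ _ => Nat.zero_le _) (mem_univ i)
            have := Nat.mul_le_mul_left m (hterm.trans hsum)
            nlinarith [Nat.zero_le (#{v ∈ A | g v = j} * d ^ 2)]
        have htotal := sum_le_sum fun j (_ : j ∈ univ) => hweight j
        have hload : ∑ j, ∑ i, a i w * ∑ v ∈ A with g v = j, a i v ≤ d * (m * d) := by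
          rw [sum_comm]
          calc ∑ i, ∑ j, a i w * ∑ v ∈ A with g v = j, a i v
              = ∑ i, a i w * ∑ v ∈ A, a i v := by
                simp only [← mul_sum, sum_fiberwise]
            _ ≤ ∑ i, a i w * (m * d) := sum_le_sum fun i _ =>
                Nat.mul_le_mul_left _ ((Nat.le_add_left _ _).trans (hcol i))
            _ ≤ d * (m * d) := by
                rw [← sum_mul]
                exact Nat.mul_le_mul_right _ hw
        simp only [sum_const, card_univ, Fintype.card_fin, smul_eq_mul, sum_add_distrib,
          ← sum_mul, ← mul_sum, hcard] at htotal
        have := Nat.mul_le_mul_left m hload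
        have := Nat.mul_le_mul_right (d ^ 2) hW
        have := pow_pos hd 2
        nlinarith
    have hup (k : Fin m) : {v ∈ A | Function.update g w j v = k} = {v ∈ A | g v = k} :=
      filter_congr fun v hv => by
        rw [Function.update_of_ne (ne_of_mem_of_not_mem hv hwA)]
    refine ⟨Function.update g w j, fun k => ?_⟩
    rw [filter_insert, Function.update_self, hup]
    split_ifs with hjk
    · subst hjk
      have hnot : w ∉ {v ∈ A | g v = j} := fun h => hwA (mem_filter.1 h).1
      refine ⟨?_, fun i => ?_⟩
      · rw [card_insert_of_notMem hnot]
        exact hj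
      · rw [sum_insert hnot]
        exact hij i
    · exact hg k

/-- Lemma 2 of the paper; Lemma 1 of Deligkas, Fearnley and Savani.
A bipartite graph on `n = m²` vertices with sides `U`, `W` and maximum degree `d`
admits partitions of `U` and `W` into `m` blocks each of size at most `2m`, such that
any pair of blocks spans at most `2d²` edges. -/
theorem bipartite_partition
    {V : Type*} [Fintype V] [DecidableEq V]
    (G : SimpleGraph V) [DecidableRel G.Adj]
    (U W : Finset V)
    (hdisj : Disjoint U W) (hcover : U ∪ W = Finset.univ)
    (hUind : ∀ u ∈ U, ∀ v ∈ U, ¬G.Adj u v)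
    (hWind : ∀ u ∈ W, ∀ v ∈ W, ¬G.Adj u v)
    (d m : ℕ) (hm : 0 < m)
    (hn : Fintype.card V = m * m)
    (hdeg : ∀ v : V, G.degree v ≤ d)
    (c : ℝ) (hc : c ∈ Set.Icc (0 : ℝ) 1)
    (hU : (U.card : ℝ) = c * (Fintype.card V : ℝ))
    (hW : (W.card : ℝ) = (1 - c) * (Fintype.card V : ℝ)) :
    ∃ S T : Fin m → Finset V,
      (∀ i j : Fin m, i ≠ j → Disjoint (S i) (S j)) ∧
      Finset.univ.biUnion S = U ∧
      (∀ i j : Fin m, i ≠ j → Disjoint (T i) (T j)) ∧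
      Finset.univ.biUnion T = W ∧
      (∀ i, (S i).card ≤ 2 * m) ∧
      (∀ j, (T j).card ≤ 2 * m) ∧
      (∀ i j, (((S i) ×ˢ (T j)).filter fun p => G.Adj p.1 p.2).card ≤ 2 * d ^ 2) := by
  let e : V ≃ Fin m × Fin m := Fintype.equivOfCardEq (by simp [hn])
  let f : V → Fin m := fun v => (e v).1
  have hf (i : Fin m) : #{u ∈ U | f u = i} ≤ m := by
    calc #{u ∈ U | f u = i} ≤ #(univ : Finset (Fin m)) := by
          refine card_le_card_of_injOn (fun v => (e v).2) (fun _ _ => mem_coe.2 (mem_univ _)) ?_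
          intro u hu v hv huv
          simp only [coe_filter, Set.mem_ofPred_eq] at hu hv
          exact e.injective (Prod.ext (hu.2.trans hv.2.symm) huv)
      _ = m := by simp
  have hnbr (X : Finset V) (v : V) : #{u ∈ X | G.Adj v u} ≤ d := by
    refine le_trans (card_le_card fun u hu => ?_) (hdeg v)
    simpa using (mem_filter.1 hu).2
  obtain ⟨g, hg⟩ := exists_balanced_coloring
    (fun i w => #{u ∈ {u ∈ U | f u = i} | G.Adj u w}) (d := d) hm W
    (hn ▸ card_le_univ W)
    (fun w _ => by
      refine le_trans (le_of_eq ?_) (hnbr U w)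
      rw [card_eq_sum_card_fiberwise (f := f) (t := univ) fun _ _ => mem_coe.2 (mem_univ _)]
      simp only [filter_filter, G.adj_comm, and_comm])
    (fun i => by
      have := sum_card_bipartiteAbove_eq_sum_card_bipartiteBelow G.Adj
        (s := {u ∈ U | f u = i}) (t := W)
      simp only [bipartiteAbove, bipartiteBelow] at this
      rw [← this]
      exact (sum_le_card_nsmul _ _ d fun u _ => hnbr W u).trans
        (Nat.mul_le_mul_right d (hf i)))
  have hdisjoint (X : Finset V) (h : V → Fin m) (i j : Fin m) (hij : i ≠ j) :
      Disjoint {v ∈ X | h v = i} {v ∈ X | h v = j} :=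
    disjoint_filter.2 fun _ _ hi hj => hij (hi.symm.trans hj)
  have hunion (X : Finset V) (h : V → Fin m) :
      univ.biUnion (fun i => {v ∈ X | h v = i}) = X := by
    ext v
    simp
  refine ⟨fun i => {u ∈ U | f u = i}, fun j => {w ∈ W | g w = j}, hdisjoint U f, hunion U f,
    hdisjoint W g, hunion W g, fun i => (hf i).trans (by omega), fun j => (hg j).1,
    fun i j => ?_⟩
  refine le_trans (le_of_eq ?_) ((hg j).2 i)
  rw [card_filter, sum_product_right]
  simp only [card_filter]
end

section
/- Let Θ be a finite set of states, R a finite set of receivers with |R| = n̄ ≥ 2, each r ∈ R with a finite action set A^r of cardinality at most ϱ, where ϱ ≥ 2, and utility u^r : A^r × Θ → [0,1]. Let 0 < ε ≤ 1, 0 < δ ≤ 1, p* ∈ Δ_Θ, and k = ⌈32·ln(4·n̄·ϱ/δ)/ε²⌉. Let γ̃ be the empirical distribution of k i.i.d. samples drawn from p*, and let P = {p ∈ Δ_Θ : |Σ_θ p_θ·u^r(a,θ) − Σ_θ p*_θ·u^r(a,θ)| ≤ ε/2 for every receiver r and every a ∈ A^r}. Then for every θ ∈ Θ and every integer i with 0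 ≤ i ≤ k and |i/k − p*_θ| ≤ ε/4, it holds that Pr(γ̃ ∈ P and γ̃_θ = i/k) ≥ (1 − δ/2)·Pr(γ̃_θ = i/k). -/
open Finset

/-- The empirical distribution of a vector `s` of `k` samples from `Θ`:
`empDist s θ` is the fraction of samples equal to `θ`. -/
noncomputable def empDist {Θ : Type*} [Fintype Θ] [DecidableEq Θ] {k : ℕ}
    (s : Fin k → Θ) (θ : Θ) : ℝ :=
  ((Finset.univ.filter fun t => s t = θ).card : ℝ) / k

section Concentration

variable {Θ : Type*}

/-- Weighted form of Hoeffding's lemma for centred functions with values in `[-1, 1]`. -/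
lemma sum_mul_exp_le_of_sum_mul_eq_zero (B : Finset Θ) (p X : Θ → ℝ) (hp : ∀ x, 0 ≤ p x)
    (hX : ∀ x, |X x| ≤ 1) (hmean : ∑ x ∈ B, p x * X x = 0) (c : ℝ) :
    ∑ x ∈ B, p x * Real.exp (c * X x) ≤ Real.exp (c ^ 2 / 2) * ∑ x ∈ B, p x := by
  have hconv : ∀ x, Real.exp (c * X x) ≤ Real.cosh c + X x * Real.sinh c := by
    intro x
    obtain ⟨hl, hr⟩ := abs_le.mp (hX x)
    have h := convexOn_exp.2 (Set.mem_univ c) (Set.mem_univ (-c))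
      (show 0 ≤ (1 + X x) / 2 by linarith) (show 0 ≤ (1 - X x) / 2 by linarith) (by ring)
    simp only [smul_eq_mul] at h
    rw [show (1 + X x) / 2 * c + (1 - X x) / 2 * -c = c * X x by ring] at h
    rw [Real.cosh_eq, Real.sinh_eq]
    linarith
  calc ∑ x ∈ B, p x * Real.exp (c * X x)
      ≤ ∑ x ∈ B, p x * (Real.cosh c + X x * Real.sinh c) :=
        sum_le_sum fun x _ => mul_le_mul_of_nonneg_left (hconv x) (hp x)
    _ = Real.cosh c * ∑ x ∈ B, p x + Real.sinh c * ∑ x ∈ B, p x * X x := by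
        rw [mul_sum, mul_sum, ← sum_add_distrib]
        exact sum_congr rfl fun x _ => by ring
    _ ≤ Real.exp (c ^ 2 / 2) * ∑ x ∈ B, p x := by
        rw [hmean, mul_zero, add_zero]
        exact mul_le_mul_of_nonneg_right (Real.cosh_le_exp_half_sq c)
          (sum_nonneg fun x _ => hp x)

variable {k : ℕ}

lemma sum_piFinset_prod_mul_exp_le (B : Fin k → Finset Θ) (p X : Θ → ℝ)
    (hp : ∀ x, 0 ≤ p x) (hX : ∀ x, |X x| ≤ 1) (hmean : ∀ t, ∑ x ∈ B t, p x * X x = 0)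
    (c : ℝ) :
    ∑ s ∈ Fintype.piFinset B, (∏ t, p (s t)) * Real.exp (c * ∑ t, X (s t)) ≤
      Real.exp (k * c ^ 2 / 2) * ∑ s ∈ Fintype.piFinset B, ∏ t, p (s t) := by
  calc ∑ s ∈ Fintype.piFinset B, (∏ t, p (s t)) * Real.exp (c * ∑ t, X (s t))
      = ∏ t, ∑ x ∈ B t, p x * Real.exp (c * X x) := by
        rw [prod_univ_sum]
        refine sum_congr rfl fun s _ => ?_
        rw [mul_sum, Real.exp_sum, prod_mul_distrib]
    _ ≤ ∏ t, (Real.exp (c ^ 2 / 2) * ∑ x ∈ B t, p x) :=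
        prod_le_prod
          (fun t _ => sum_nonneg fun x _ => mul_nonneg (hp x) (Real.exp_pos _).le)
          fun t _ => sum_mul_exp_le_of_sum_mul_eq_zero (B t) p X hp hX (hmean t) c
    _ = Real.exp (k * c ^ 2 / 2) * ∑ s ∈ Fintype.piFinset B, ∏ t, p (s t) := by
        rw [prod_mul_distrib, prod_univ_sum, prod_const, card_univ, Fintype.card_fin,
          ← Real.exp_nat_mul, mul_div_assoc]

/-- Two-sided Hoeffding bound for product weights on a box. -/
lemma sum_piFinset_filter_le (B : Fin k → Finset Θ) (p X : Θ → ℝ)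
    (hp : ∀ x, 0 ≤ p x) (hX : ∀ x, |X x| ≤ 1) (hmean : ∀ t, ∑ x ∈ B t, p x * X x = 0)
    (η : ℝ) (hη : 0 ≤ η) :
    ∑ s ∈ Fintype.piFinset B with k * η < |∑ t, X (s t)|, ∏ t, p (s t) ≤
      2 * Real.exp (-(k * η ^ 2 / 2)) * ∑ s ∈ Fintype.piFinset B, ∏ t, p (s t) := by
  have hw : ∀ s : Fin k → Θ, 0 ≤ ∏ t, p (s t) := fun s => prod_nonneg fun t _ => hp _
  have hpt : ∀ s : Fin k → Θ,
      (if k * η < |∑ t, X (s t)| then ∏ t, p (s t) else 0) ≤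
        Real.exp (-(k * η ^ 2)) * ((∏ t, p (s t)) * Real.exp (η * ∑ t, X (s t))) +
        Real.exp (-(k * η ^ 2)) * ((∏ t, p (s t)) * Real.exp (-η * ∑ t, X (s t))) := by
    intro s
    set G := ∑ t, X (s t)
    have hsum : Real.exp (-(k * η ^ 2)) * ((∏ t, p (s t)) * Real.exp (η * G)) +
        Real.exp (-(k * η ^ 2)) * ((∏ t, p (s t)) * Real.exp (-η * G)) =
        (∏ t, p (s t)) * (Real.exp (η * G - k * η ^ 2) + Real.exp (-η * G - k * η ^ 2)) := by
      rw [sub_eq_add_neg, sub_eq_add_neg, Real.exp_add, Real.exp_add]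
      ring
    rw [hsum]
    split_ifs with h
    · refine le_mul_of_one_le_right (hw s) ?_
      rcases lt_abs.mp h with h | h
      · have := Real.one_le_exp (show 0 ≤ η * G - k * η ^ 2 by nlinarith)
        linarith [Real.exp_pos (-η * G - k * η ^ 2)]
      · have := Real.one_le_exp (show 0 ≤ -η * G - k * η ^ 2 by nlinarith)
        linarith [Real.exp_pos (η * G - k * η ^ 2)]
    · exact mul_nonneg (hw s) (by positivity)
  have hexp : Real.exp (-(k * η ^ 2 / 2)) =
      Real.exp (-(k * η ^ 2)) * Real.exp (k * η ^ 2 / 2) := by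
    rw [← Real.exp_add]
    ring_nf
  have hpos := sum_piFinset_prod_mul_exp_le B p X hp hX hmean η
  have hneg := sum_piFinset_prod_mul_exp_le B p X hp hX hmean (-η)
  rw [neg_sq] at hneg
  rw [sum_filter]
  refine (sum_le_sum fun s _ => hpt s).trans ?_
  rw [sum_add_distrib, ← mul_sum, ← mul_sum, hexp]
  have h₁ := mul_le_mul_of_nonneg_left hpos (Real.exp_pos (-(k * η ^ 2))).le
  have h₂ := mul_le_mul_of_nonneg_left hneg (Real.exp_pos (-(k * η ^ 2))).le
  linarith

end Concentration

lemma exists_weighted_mean_mem_Icc {Θ : Type*} (B : Finset Θ) (p u : Θ → ℝ)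
    (hp : ∀ x, 0 ≤ p x) (hu : ∀ x, u x ∈ Set.Icc (0 : ℝ) 1) :
    ∃ μ ∈ Set.Icc (0 : ℝ) 1, ∑ x ∈ B, p x * u x = (∑ x ∈ B, p x) * μ := by
  have hnonneg : 0 ≤ ∑ x ∈ B, p x * u x := sum_nonneg fun x _ => mul_nonneg (hp x) (hu x).1
  have hle : ∑ x ∈ B, p x * u x ≤ ∑ x ∈ B, p x :=
    sum_le_sum fun x _ => mul_le_of_le_one_right (hp x) (hu x).2
  have hmass : 0 ≤ ∑ x ∈ B, p x := sum_nonneg fun x _ => hp x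
  refine ⟨(∑ x ∈ B, p x * u x) / ∑ x ∈ B, p x,
    ⟨div_nonneg hnonneg hmass, div_le_one_of_le₀ hle hmass⟩, ?_⟩
  rcases hmass.eq_or_lt with h | h
  · rw [← h, zero_mul]
    exact le_antisymm (h ▸ hle) hnonneg
  · rw [mul_div_cancel₀ _ h.ne']

section Empirical

variable {Θ : Type*} [Fintype Θ] [DecidableEq Θ] {k : ℕ}

lemma sum_empDist_mul (s : Fin k → Θ) (u : Θ → ℝ) :
    ∑ x, empDist s x * u x = (∑ t, u (s t)) / k := by
  rw [← sum_fiberwise univ s fun t => u (s t), sum_div]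
  refine sum_congr rfl fun x _ => ?_
  rw [sum_congr rfl (g := fun _ => u x) fun t ht => by rw [(mem_filter.mp ht).2], sum_const,
    nsmul_eq_mul, empDist]
  ring

lemma empDist_eq_div_iff (hk : 0 < k) (s : Fin k → Θ) (θ : Θ) (i : ℕ) :
    empDist s θ = (i : ℝ) / k ↔ #{t | s t = θ} = i := by
  have : (k : ℝ) ≠ 0 := by positivity
  rw [empDist, div_left_inj' this, Nat.cast_inj]

/-- The sample vectors taking the value `θ` exactly on `S` form a box. -/
lemma mem_piFinset_ite_iff (S : Finset (Fin k)) (θ : Θ) (s : Fin k → Θ) :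
    s ∈ Fintype.piFinset (fun t => if t ∈ S then {θ} else univ.erase θ) ↔
      ({t | s t = θ} : Finset (Fin k)) = S := by
  rw [Fintype.mem_piFinset, Finset.ext_iff]
  refine forall_congr' fun t => ?_
  by_cases h : t ∈ S <;> simp [h]

/-- Conditionally on the number of samples equal to `θ`, the empirical mean of a `[0, 1]`-valued
function deviates from its mean by more than `ε / 2` with exponentially small probability. -/
lemma sum_filter_deviation_le (hk : 0 < k) (p u : Θ → ℝ) (hp : ∀ x, 0 ≤ p x)
    (hp1 : ∑ x, p x = 1) (hu : ∀ x, u x ∈ Set.Icc (0 : ℝ) 1) (ε : ℝ) (hε : 0 ≤ ε) (θ : Θ)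
    (i : ℕ) (hclose : |(i : ℝ) / k - p θ| ≤ ε / 4) :
    ∑ s : Fin k → Θ with #{t | s t = θ} = i ∧
        ε / 2 < |∑ x, empDist s x * u x - ∑ x, p x * u x|, ∏ t, p (s t) ≤
      2 * Real.exp (-(k * ε ^ 2 / 32)) *
        ∑ s : Fin k → Θ with #{t | s t = θ} = i, ∏ t, p (s t) := by
  have hk' : (0 : ℝ) < k := by exact_mod_cast hk
  obtain ⟨μ, hμ, hmean⟩ := exists_weighted_mean_mem_Icc (univ.erase θ) p u hp hu
  have hmass : ∑ x ∈ univ.erase θ, p x = 1 - p θ := by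
    rw [← hp1, ← add_sum_erase univ p (mem_univ θ)]
    ring
  set X : Θ → ℝ := fun x => if x = θ then 0 else u x - μ with hXdef
  have hX : ∀ x, |X x| ≤ 1 := by
    intro x
    have := hu x
    simp only [hXdef, Set.mem_Icc] at *
    split_ifs
    · simp
    · rw [abs_le]
      constructor <;> linarith
  have hdev : ∀ s : Fin k → Θ, #{t | s t = θ} = i →
      ε / 2 < |∑ x, empDist s x * u x - ∑ x, p x * u x| →
      k * (ε / 4) < |∑ t, X (s t)| := by
    intro s hs hlt
    have hsum : ∑ t, u (s t) = ∑ t, X (s t) + i * (u θ - μ) + k * μ := by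
      have hu' : ∀ t, u (s t) = X (s t) + (if s t = θ then u θ - μ else 0) + μ := by
        intro t
        simp only [hXdef]
        split_ifs with h
        · rw [h]
          ring
        · ring
      rw [sum_congr rfl fun t _ => hu' t, sum_add_distrib, sum_add_distrib, ← sum_filter,
        sum_const, hs]
      simp
    have hmean' : ∑ x, p x * u x = p θ * u θ + (1 - p θ) * μ := by
      rw [← add_sum_erase univ _ (mem_univ θ), hmean, hmass]
    have heq : ∑ x, empDist s x * u x - ∑ x, p x * u x =
        (∑ t, X (s t)) / k + ((i : ℝ) / k - p θ) * (u θ - μ) := by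
      rw [sum_empDist_mul, hsum, hmean']
      field_simp
      ring
    rw [heq] at hlt
    have hθ : |u θ - μ| ≤ 1 := by
      have := hu θ
      simp only [Set.mem_Icc] at *
      rw [abs_le]
      constructor <;> linarith
    have hbias : |((i : ℝ) / k - p θ) * (u θ - μ)| ≤ ε / 4 := by
      rw [abs_mul]
      exact (mul_le_of_le_one_right (abs_nonneg _) hθ).trans hclose
    have hlt' : ε / 4 < |∑ t, X (s t)| / k := by
      have := abs_add_le ((∑ t, X (s t)) / k) (((i : ℝ) / k - p θ) * (u θ - μ))
      rw [abs_div, abs_of_pos hk'] at this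
      linarith
    rw [lt_div_iff₀ hk'] at hlt'
    linarith
  have hbox : ∀ S : Finset (Fin k), #S = i →
      ∑ s : Fin k → Θ with (#{t | s t = θ} = i ∧
        ε / 2 < |∑ x, empDist s x * u x - ∑ x, p x * u x|) ∧
          ({t | s t = θ} : Finset (Fin k)) = S, ∏ t, p (s t) ≤
      2 * Real.exp (-(k * ε ^ 2 / 32)) *
        ∑ s : Fin k → Θ with #{t | s t = θ} = i ∧ ({t | s t = θ} : Finset (Fin k)) = S,
          ∏ t, p (s t) := by
    intro S hS
    have h := sum_piFinset_filter_le (fun t => if t ∈ S then {θ} else univ.erase θ) p X hp hX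
      (by
        intro t
        split_ifs
        · simp [hXdef]
        · rw [sum_congr rfl (g := fun x => p x * u x - p x * μ) fun x hx => by
            simp only [hXdef, if_neg (ne_of_mem_erase hx)]
            ring, sum_sub_distrib, hmean, sum_mul, sub_self])
      (ε / 4) (by linarith)
    rw [show (k : ℝ) * (ε / 4) ^ 2 / 2 = k * ε ^ 2 / 32 by ring] at h
    have hset : (univ.filter fun s : Fin k → Θ =>
        #{t | s t = θ} = i ∧ ({t | s t = θ} : Finset (Fin k)) = S) =
        Fintype.piFinset (fun t => if t ∈ S then {θ} else univ.erase θ) := by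
      ext s
      rw [mem_piFinset_ite_iff, mem_filter]
      exact ⟨fun h => h.2.2, fun h => ⟨mem_univ _, h ▸ hS, h⟩⟩
    rw [hset]
    refine le_trans (sum_le_sum_of_subset_of_nonneg (fun s hs => ?_)
      fun s _ _ => prod_nonneg fun t _ => hp _) h
    obtain ⟨-, ⟨hcard, hlt⟩, hs⟩ := mem_filter.mp hs
    exact mem_filter.mpr ⟨(mem_piFinset_ite_iff S θ s).mpr hs, hdev s hcard hlt⟩
  have hmaps : ∀ s : Fin k → Θ, #{t | s t = θ} = i →
      ({t | s t = θ} : Finset (Fin k)) ∈ powersetCard i univ :=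
    fun s hs => mem_powersetCard.mpr ⟨subset_univ _, hs⟩
  rw [← sum_fiberwise_of_maps_to (fun s hs => hmaps s (mem_filter.mp hs).2.1),
    ← sum_fiberwise_of_maps_to (fun s hs => hmaps s (mem_filter.mp hs).2), mul_sum]
  refine sum_le_sum fun S hS => ?_
  rw [filter_filter, filter_filter]
  exact hbox S (mem_powersetCard.mp hS).2

end Empirical

/-- Lemma 11, `lemma:bicriteria_1`.
Let `γ̃` be the empirical distribution of `k` i.i.d. samples from `pstar`, where
`k = ⌈32·ln(4 n̄ ϱ/δ)/ε²⌉`, and let `P` be the set of posteriors whose induced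
expected utilities are `ε/2`-close to those of `pstar` for every receiver and action.
Then for every `θ` and every `i ≤ k` with `|i/k − pstar θ| ≤ ε/4`,
`Pr(γ̃ ∈ P ∧ γ̃_θ = i/k) ≥ (1 − δ/2)·Pr(γ̃_θ = i/k)`.
Probabilities are expressed as sums of the product weights `∏ t, pstar (s t)` over
sample vectors `s : Fin k → Θ`. -/
theorem bicriteria_1
    {Θ R : Type*} [Fintype Θ] [DecidableEq Θ] [Nonempty Θ] [Fintype R]
    (A : R → Type*) [∀ r, Fintype (A r)] [∀ r, Nonempty (A r)]
    (nbar ϱ : ℕ) (hcard : Fintype.card R = nbar) (hn2 : 2 ≤ nbar)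
    (hϱ : ∀ r, Fintype.card (A r) ≤ ϱ) (hϱ2 : 2 ≤ ϱ)
    (u : (r : R) → A r → Θ → ℝ)
    (hu : ∀ r (a : A r) (θ : Θ), u r a θ ∈ Set.Icc (0 : ℝ) 1)
    (ε δ : ℝ) (hε0 : 0 < ε) (hε1 : ε ≤ 1) (hδ0 : 0 < δ) (hδ1 : δ ≤ 1)
    (k : ℕ) (hk : k = ⌈32 * Real.log (4 * nbar * ϱ / δ) / ε ^ 2⌉₊)
    (pstar : Θ → ℝ) (hp0 : ∀ θ, 0 ≤ pstar θ) (hp1 : ∑ θ, pstar θ = 1)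
    (θ : Θ) (i : ℕ) (hik : i ≤ k)
    (hclose : |(i : ℝ) / k - pstar θ| ≤ ε / 4) :
    (1 - δ / 2) *
        ∑ s ∈ Finset.univ.filter (fun s : Fin k → Θ => empDist s θ = (i : ℝ) / k),
          ∏ t, pstar (s t) ≤
      ∑ s ∈ Finset.univ.filter (fun s : Fin k → Θ =>
            (∀ r (a : A r),
              |(∑ θ', empDist s θ' * u r a θ') - ∑ θ', pstar θ' * u r a θ'| ≤ ε / 2) ∧
            empDist s θ = (i : ℝ) / k),
          ∏ t, pstar (s t) := by
  have hnρ : (4 : ℝ) ≤ nbar * ϱ := by exact_mod_cast Nat.mul_le_mul hn2 hϱ2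
  have hratio : 1 < 4 * nbar * ϱ / δ := by
    rw [one_lt_div hδ0]
    linarith
  have hkε : 32 * Real.log (4 * nbar * ϱ / δ) ≤ k * ε ^ 2 := by
    rw [← div_le_iff₀ (by positivity), hk]
    exact Nat.le_ceil _
  have hkpos : 0 < k := by
    rw [hk, Nat.ceil_pos]
    have := Real.log_pos hratio
    positivity
  have hexp : nbar * ϱ * (2 * Real.exp (-(k * ε ^ 2 / 32))) ≤ δ / 2 := by
    have h : Real.exp (-(k * ε ^ 2 / 32)) ≤ (4 * nbar * ϱ / δ)⁻¹ := by
      rw [← Real.exp_log (inv_pos.mpr (zero_lt_one.trans hratio)), Real.log_inv]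
      exact Real.exp_le_exp.mpr (by linarith)
    calc nbar * ϱ * (2 * Real.exp (-(k * ε ^ 2 / 32)))
        ≤ nbar * ϱ * (2 * (4 * nbar * ϱ / δ)⁻¹) := by gcongr
      _ = δ / 2 := by
          have : (nbar : ℝ) ≠ 0 := by rintro h; rw [h] at hnρ; linarith
          have : (ϱ : ℝ) ≠ 0 := by rintro h; rw [h] at hnρ; linarith
          field_simp
          norm_num
  have hw : ∀ s : Fin k → Θ, 0 ≤ ∏ t, pstar (s t) := fun s => prod_nonneg fun t _ => hp0 _
  simp only [empDist_eq_div_iff hkpos]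
  set W := ∑ s : Fin k → Θ with #{t | s t = θ} = i, ∏ t, pstar (s t) with hW
  have hW0 : 0 ≤ W := sum_nonneg fun s _ => hw s
  have hcardσ : (Fintype.card (Σ r, A r) : ℝ) ≤ nbar * ϱ := by
    rw [Fintype.card_sigma]
    have := sum_le_card_nsmul univ (fun r => Fintype.card (A r)) ϱ fun r _ => hϱ r
    rw [card_univ, hcard, smul_eq_mul] at this
    exact_mod_cast this
  have hunion : W ≤ ∑ s : Fin k → Θ with
        (∀ r (a : A r),
          |(∑ θ', empDist s θ' * u r a θ') - ∑ θ', pstar θ' * u r a θ'| ≤ ε / 2) ∧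
            #{t | s t = θ} = i, ∏ t, pstar (s t) +
      ∑ x : Σ r, A r, ∑ s : Fin k → Θ with #{t | s t = θ} = i ∧
        ε / 2 < |∑ θ', empDist s θ' * u x.1 x.2 θ' - ∑ θ', pstar θ' * u x.1 x.2 θ'|,
          ∏ t, pstar (s t) := by
    simp only [hW, sum_filter]
    rw [sum_comm, ← sum_add_distrib]
    refine sum_le_sum fun s _ => ?_
    have hterm : ∀ x : Σ r, A r, 0 ≤ if #{t | s t = θ} = i ∧
        ε / 2 < |∑ θ', empDist s θ' * u x.1 x.2 θ' - ∑ θ', pstar θ' * u x.1 x.2 θ'|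
        then ∏ t, pstar (s t) else 0 := fun x => by
      split_ifs
      exacts [hw s, le_rfl]
    by_cases hs : #{t | s t = θ} = i
    · by_cases hgood : ∀ r (a : A r),
          |(∑ θ', empDist s θ' * u r a θ') - ∑ θ', pstar θ' * u r a θ'| ≤ ε / 2
      · rw [if_pos hs, if_pos ⟨hgood, hs⟩]
        exact le_add_of_nonneg_right (sum_nonneg fun x _ => hterm x)
      · rw [if_pos hs, if_neg fun h => hgood h.1, zero_add]
        push Not at hgood
        obtain ⟨r, a, hra⟩ := hgood
        have hsingle := single_le_sum (fun x _ => hterm x) (mem_univ (⟨r, a⟩ : Σ r, A r))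
        rwa [if_pos ⟨hs, hra⟩] at hsingle
    · simp [hs]
  have hbad : ∑ x : Σ r, A r, ∑ s : Fin k → Θ with #{t | s t = θ} = i ∧
      ε / 2 < |∑ θ', empDist s θ' * u x.1 x.2 θ' - ∑ θ', pstar θ' * u x.1 x.2 θ'|,
        ∏ t, pstar (s t) ≤ δ / 2 * W := by
    refine (sum_le_card_nsmul univ _ (2 * Real.exp (-(k * ε ^ 2 / 32)) * W) fun x _ =>
      sum_filter_deviation_le hkpos pstar (u x.1 x.2) hp0 hp1 (hu x.1 x.2) ε hε0.le θ i
        hclose).trans ?_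
    rw [card_univ, nsmul_eq_mul, ← mul_assoc]
    refine mul_le_mul_of_nonneg_right (le_trans ?_ hexp) hW0
    exact mul_le_mul_of_nonneg_right hcardσ (by positivity)
  linarith
end

section
/- Let n̄ ≥ 2 and ϱ ≥ 2 be integers, let 0 < ε ≤ 1 and 0 < δ ≤ 1 be reals, let k = ⌈32·ln(4·n̄·ϱ/δ)/ε²⌉, let Θ be a finite set, and let p* ∈ Δ_Θ. Let γ̃ be the empirical distribution of k i.i.d. samples drawn from p*. Then for every θ ∈ Θ, Pr(|γ̃_θ − p*_θ| ≥ ε/4) ≤ (δ/2)·p*_θ. Equivalently, if X is a binomial random variable with parameters k and p ∈ [0,1], then Pr(|X/k − p| ≥ ε/4) ≤ (δ/2)·p. -/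
open Finset

theorem exp_neg_le_quadratic {u : ℝ} (hu : 0 ≤ u) : Real.exp (-u) ≤ 1 - u + u ^ 2 / 2 := by
  have h := Real.quadratic_le_exp_of_nonneg hu
  have hq : 0 ≤ 1 - u + u ^ 2 / 2 := by nlinarith [sq_nonneg (u - 1)]
  rw [Real.exp_neg, inv_le_iff_one_le_mul₀ (Real.exp_pos u)]
  nlinarith [mul_le_mul_of_nonneg_left h hq, sq_nonneg (u ^ 2)]

theorem exp_sub_one_sub_le {u : ℝ} (hu : 0 ≤ u) :
    Real.exp u - 1 - u ≤ u ^ 2 / 2 * Real.exp u := by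
  let f : ℝ → ℝ := fun x => (1 + x) * Real.exp (-x) + x ^ 2 / 2
  have hf : ∀ x, HasDerivAt f (x * (1 - Real.exp (-x))) x := by
    intro x
    have h := (((hasDerivAt_id x).const_add 1).mul (hasDerivAt_id x).neg.exp).add
      (((hasDerivAt_id x).pow 2).div_const 2)
    refine h.congr_deriv ?_
    simp
    ring
  have hmono : MonotoneOn f (Set.Ici 0) := by
    refine monotoneOn_of_deriv_nonneg (convex_Ici 0)
      (fun x _ => (hf x).continuousAt.continuousWithinAt)
      (fun x _ => (hf x).differentiableAt.differentiableWithinAt) fun x hx => ?_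
    rw [interior_Ici, Set.mem_Ioi] at hx
    rw [(hf x).deriv]
    exact mul_nonneg hx.le (sub_nonneg.2 (Real.exp_le_one_iff.2 (by linarith)))
  have h0 : 1 ≤ (1 + u) * Real.exp (-u) + u ^ 2 / 2 := by
    simpa [f] using hmono Set.self_mem_Ici hu hu
  have h1 : Real.exp (-u) * Real.exp u = 1 := by rw [← Real.exp_add]; simp
  nlinarith [mul_le_mul_of_nonneg_right h0 (Real.exp_pos u).le]

/-- Chernoff's method for the frequency of `θ` among `k` i.i.d. samples: a bound
`exp (l * p θ + c)` on the moment generating function of one indicator at `l` gives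
an exponential tail bound. -/
theorem sum_prod_le_exp_of_mgf_le {Θ : Type*} [Fintype Θ] [DecidableEq Θ] {k : ℕ} (hk : 0 < k)
    {p : Θ → ℝ} (hp0 : ∀ x, 0 ≤ p x) (hp1 : ∑ x, p x = 1) (θ : Θ) {l b c : ℝ}
    (hc : 1 + p θ * (Real.exp l - 1) ≤ Real.exp (l * p θ + c)) :
    ∑ s ∈ univ.filter (fun s : Fin k → Θ => b ≤ l * (empDist s θ - p θ)), ∏ t, p (s t) ≤
      Real.exp (k * (c - b)) := by
  have hk' : (k : ℝ) ≠ 0 := by positivity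
  have hw : ∀ s : Fin k → Θ, 0 ≤ ∏ t, p (s t) := fun s => prod_nonneg fun t _ => hp0 _
  have hmgf : ∑ x, p x * (if x = θ then Real.exp l else 1) = 1 + p θ * (Real.exp l - 1) := by
    have : ∀ x, p x * (if x = θ then Real.exp l else 1) =
        p x + if x = θ then p x * (Real.exp l - 1) else 0 := by
      intro x; split_ifs <;> ring
    simp [this, sum_add_distrib, hp1]
  have hprod : ∀ s : Fin k → Θ, ∏ t, p (s t) * (if s t = θ then Real.exp l else 1) =
      (∏ t, p (s t)) * Real.exp (k * (l * empDist s θ)) := by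
    intro s
    rw [prod_mul_distrib, prod_ite, prod_const, prod_const_one, mul_one, ← Real.exp_nat_mul]
    congr 2
    unfold empDist
    field_simp
  calc ∑ s ∈ univ.filter (fun s : Fin k → Θ => b ≤ l * (empDist s θ - p θ)), ∏ t, p (s t)
      ≤ ∑ s ∈ univ.filter (fun s : Fin k → Θ => b ≤ l * (empDist s θ - p θ)),
          (∏ t, p (s t)) * Real.exp (k * (l * (empDist s θ - p θ) - b)) := by
        refine sum_le_sum fun s hs => le_mul_of_one_le_right (hw s) (Real.one_le_exp ?_)
        exact mul_nonneg (Nat.cast_nonneg k) (sub_nonneg.2 (mem_filter.1 hs).2)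
    _ ≤ ∑ s : Fin k → Θ, (∏ t, p (s t)) * Real.exp (k * (l * (empDist s θ - p θ) - b)) :=
        sum_le_sum_of_subset_of_nonneg (filter_subset _ _)
          fun s _ _ => mul_nonneg (hw s) (Real.exp_pos _).le
    _ = (1 + p θ * (Real.exp l - 1)) ^ k * Real.exp (-(k * (l * p θ + b))) := by
        rw [← hmgf, Fintype.sum_pow, sum_mul]
        refine sum_congr rfl fun s _ => ?_
        rw [hprod, mul_assoc, ← Real.exp_add]
        ring_nf
    _ ≤ Real.exp (l * p θ + c) ^ k * Real.exp (-(k * (l * p θ + b))) := by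
        refine mul_le_mul_of_nonneg_right (pow_le_pow_left₀ ?_ hc k) (Real.exp_pos _).le
        rw [← hmgf]
        exact sum_nonneg fun x _ => mul_nonneg (hp0 x) (by split_ifs <;> positivity)
    _ = Real.exp (k * (c - b)) := by
        rw [← Real.exp_nat_mul, ← Real.exp_add]
        ring_nf

/-- The exponent `L` controls the lower tail with an additional factor `p θ`. -/
theorem lower_tail_le {Θ : Type*} [Fintype Θ] [DecidableEq Θ] {k : ℕ} (hk : 0 < k)
    {p : Θ → ℝ} (hp0 : ∀ x, 0 ≤ p x) (hp1 : ∑ x, p x = 1) {θ : Θ} (hθ : 0 < p θ)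
    {a L : ℝ} (ha : 0 < a) (hL : 2 ≤ L) (hkL : 2 * L ≤ k * a ^ 2) :
    ∑ s ∈ univ.filter (fun s : Fin k → Θ => empDist s θ - p θ ≤ -a), ∏ t, p (s t) ≤
      Real.exp (-L) * p θ := by
  have hle1 : p θ ≤ 1 := hp1 ▸ single_le_sum (fun x _ => hp0 x) (mem_univ θ)
  set u := a / p θ with hu
  have hu0 : 0 < u := div_pos ha hθ
  have hpu : p θ * u = a := mul_div_cancel₀ a hθ.ne'
  have hmgf : 1 + p θ * (Real.exp (-u) - 1) ≤ Real.exp (-u * p θ + p θ * u ^ 2 / 2) := by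
    refine le_trans ?_ (Real.add_one_le_exp _)
    nlinarith [mul_le_mul_of_nonneg_left (exp_neg_le_quadratic hu0.le) hθ.le]
  have h := sum_prod_le_exp_of_mgf_le (k := k) hk hp0 hp1 θ (b := u * a) hmgf
  have hset : (fun s : Fin k → Θ => u * a ≤ -u * (empDist s θ - p θ)) =
      fun s => empDist s θ - p θ ≤ -a := by
    funext s
    rw [neg_mul, ← mul_neg, mul_le_mul_iff_right₀ hu0, le_neg]
  simp only [congrFun hset] at h
  refine h.trans ?_
  have hexp : (k : ℝ) * (p θ * u ^ 2 / 2 - u * a) ≤ -L + -(1 / p θ - 1) := by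
    have e : (k : ℝ) * (p θ * u ^ 2 / 2 - u * a) = -(k * a ^ 2) / 2 * (1 / p θ) := by
      rw [hu]; field_simp; ring
    have hone : 1 ≤ 1 / p θ := by rw [le_div_iff₀ hθ]; linarith
    rw [e]
    nlinarith
  have hp : Real.exp (-(1 / p θ - 1)) ≤ p θ := by
    rw [Real.exp_neg, inv_le_comm₀ (Real.exp_pos _) hθ, ← one_div]
    linarith [Real.add_one_le_exp (1 / p θ - 1)]
  calc _ ≤ Real.exp (-L + -(1 / p θ - 1)) := Real.exp_le_exp.2 hexp
    _ = Real.exp (-L) * Real.exp (-(1 / p θ - 1)) := Real.exp_add _ _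
    _ ≤ _ := mul_le_mul_of_nonneg_left hp (Real.exp_pos _).le

/-- The exponent `L` controls the upper tail with an additional factor `p θ`. -/
theorem upper_tail_le {Θ : Type*} [Fintype Θ] [DecidableEq Θ] {k : ℕ} (hk : 0 < k)
    {p : Θ → ℝ} (hp0 : ∀ x, 0 ≤ p x) (hp1 : ∑ x, p x = 1) {θ : Θ} (hθ : 0 < p θ)
    {a L : ℝ} (ha : 0 < a) (ha' : a ≤ 1 / 4) (hL : 2 ≤ L) (hkL : 2 * L ≤ k * a ^ 2) :
    ∑ s ∈ univ.filter (fun s : Fin k → Θ => a ≤ empDist s θ - p θ), ∏ t, p (s t) ≤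
      Real.exp (-L) * p θ := by
  have hle1 : p θ ≤ 1 := hp1 ▸ single_le_sum (fun x _ => hp0 x) (mem_univ θ)
  have key : ∀ {u c : ℝ}, 0 < u →
      1 + p θ * (Real.exp u - 1) ≤ Real.exp (u * p θ + c) →
      ∑ s ∈ univ.filter (fun s : Fin k → Θ => a ≤ empDist s θ - p θ), ∏ t, p (s t) ≤
        Real.exp (k * (c - u * a)) := by
    intro u c hu hmgf
    have h := sum_prod_le_exp_of_mgf_le (k := k) hk hp0 hp1 θ (b := u * a) hmgf
    simpa only [mul_le_mul_iff_right₀ hu] using h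
  rcases le_total (p θ) (1 / 2) with hhalf | hhalf
  · set M := -Real.log (p θ) with hM
    have hpM : p θ = Real.exp (-M) := by rw [hM, neg_neg, Real.exp_log hθ]
    have hM0 : 2 / 3 ≤ M := by
      have h1 := Real.log_le_log hθ hhalf
      rw [one_div, Real.log_inv] at h1
      linarith [Real.log_two_gt_d9]
    set m := 1 + M / 2 with hm
    have hm0 : 0 < m := by linarith
    have hu : 0 < a * m := mul_pos ha hm0
    have hsmall : p θ * m * Real.exp (a * m) ≤ 1 := by
      have h1 : m ≤ Real.exp (M / 2) := by linarith [Real.add_one_le_exp (M / 2)]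
      have h2 : Real.exp (a * m) ≤ Real.exp (m / 4) := Real.exp_le_exp.2 (by nlinarith)
      calc p θ * m * Real.exp (a * m)
          ≤ Real.exp (-M) * Real.exp (M / 2) * Real.exp (m / 4) := by
            rw [hpM]; gcongr
        _ = Real.exp (-M + M / 2 + m / 4) := by rw [Real.exp_add, Real.exp_add]
        _ ≤ 1 := Real.exp_le_one_iff.2 (by linarith)
    have hmgf : 1 + p θ * (Real.exp (a * m) - 1) ≤
        Real.exp (a * m * p θ + a * (a * m) / 2) := by
      refine le_trans ?_ (Real.add_one_le_exp _)
      have h1 := mul_le_mul_of_nonneg_left (exp_sub_one_sub_le hu.le) hθ.le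
      have h2 := mul_le_mul_of_nonneg_left hsmall (by positivity : 0 ≤ a * (a * m) / 2)
      linarith
    refine (key hu hmgf).trans ?_
    calc _ ≤ Real.exp (-L + -M) := Real.exp_le_exp.2 (by nlinarith)
      _ = _ := by rw [Real.exp_add, ← hpM]
  · have hmgf : 1 + p θ * (Real.exp (2 * a) - 1) ≤ Real.exp (2 * a * p θ + a ^ 2) := by
      have h1 := exp_neg_le_quadratic (u := 2 * a) (by positivity)
      have h2 : 1 + (1 - p θ) * (Real.exp (-(2 * a)) - 1) ≤
          Real.exp (-(2 * a) * (1 - p θ) + a ^ 2) := by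
        refine le_trans ?_ (Real.add_one_le_exp _)
        nlinarith [mul_le_mul_of_nonneg_left h1 (sub_nonneg.2 hle1), sq_nonneg a]
      have h3 := mul_le_mul_of_nonneg_left h2 (Real.exp_pos (2 * a)).le
      have h4 : Real.exp (2 * a) * Real.exp (-(2 * a)) = 1 := by rw [← Real.exp_add]; simp
      rw [← Real.exp_add] at h3
      calc _ = Real.exp (2 * a) * (1 + (1 - p θ) * (Real.exp (-(2 * a)) - 1)) := by
            linear_combination (-(1 - p θ)) * h4
        _ ≤ _ := h3
        _ = _ := by ring_nf
    refine (key (by positivity) hmgf).trans ?_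
    have h5 : Real.exp (-L) ≤ p θ := by
      have h6 : 2 ≤ Real.exp L := by linarith [Real.add_one_le_exp L]
      rw [Real.exp_neg]
      exact (inv_anti₀ two_pos h6).trans (by linarith)
    calc _ ≤ Real.exp (-L + -L) := Real.exp_le_exp.2 (by nlinarith)
      _ = Real.exp (-L) * Real.exp (-L) := Real.exp_add _ _
      _ ≤ _ := mul_le_mul_of_nonneg_left h5 (Real.exp_pos _).le

/-- Lemma 12, `lemma:bicriteria_2`.
Let `γ̃` be the empirical distribution of `k` i.i.d. samples from `pstar`, where
`k = ⌈32·ln(4 n̄ ϱ/δ)/ε²⌉` with `n̄, ϱ ≥ 2`, `0 < ε ≤ 1` and `0 < δ ≤ 1`.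
Then for every state `θ`, `Pr(|γ̃_θ − pstar θ| ≥ ε/4) ≤ (δ/2)·pstar θ`.
The probability is expressed as the sum of the product weights `∏ t, pstar (s t)`
over sample vectors `s : Fin k → Θ` realizing the event. -/
theorem bicriteria_2
    (nbar ϱ : ℕ) (hn2 : 2 ≤ nbar) (hϱ2 : 2 ≤ ϱ)
    (ε δ : ℝ) (hε0 : 0 < ε) (hε1 : ε ≤ 1) (hδ0 : 0 < δ) (hδ1 : δ ≤ 1)
    (k : ℕ) (hk : k = ⌈32 * Real.log (4 * nbar * ϱ / δ) / ε ^ 2⌉₊)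
    {Θ : Type*} [Fintype Θ] [DecidableEq Θ] [Nonempty Θ]
    (pstar : Θ → ℝ) (hp0 : ∀ θ, 0 ≤ pstar θ) (hp1 : ∑ θ, pstar θ = 1)
    (θ : Θ) :
    ∑ s ∈ Finset.univ.filter (fun s : Fin k → Θ => ε / 4 ≤ |empDist s θ - pstar θ|),
        ∏ t, pstar (s t) ≤ δ / 2 * pstar θ := by
  have hnϱ : (16 : ℝ) ≤ 4 * nbar * ϱ := by
    have h1 : (2 : ℝ) ≤ nbar := by exact_mod_cast hn2
    have h2 : (2 : ℝ) ≤ ϱ := by exact_mod_cast hϱ2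
    nlinarith
  set L := Real.log (4 * nbar * ϱ / δ) with hLdef
  have hexpL : Real.exp (-L) ≤ δ / 16 := by
    rw [Real.exp_neg, hLdef, Real.exp_log (by positivity), inv_div]
    gcongr
  have hL : 2 ≤ L := by
    have h16 : Real.log 16 ≤ L := by
      refine Real.log_le_log (by norm_num) ?_
      rw [le_div_iff₀ hδ0]
      nlinarith
    have hlog : Real.log 16 = 4 * Real.log 2 := by
      rw [show (16 : ℝ) = 2 ^ 4 by norm_num, Real.log_pow]
      norm_num
    linarith [Real.log_two_gt_d9]
  have hkL : 2 * L ≤ k * (ε / 4) ^ 2 := by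
    have h := Nat.le_ceil (32 * L / ε ^ 2)
    rw [← hk, div_le_iff₀ (by positivity)] at h
    linarith
  have hkpos : 0 < k := by
    rw [hk]
    exact Nat.ceil_pos.2 (by positivity)
  have hw : ∀ s : Fin k → Θ, 0 ≤ ∏ t, pstar (s t) := fun s => prod_nonneg fun t _ => hp0 _
  rcases (hp0 θ).eq_or_lt with hθ | hθ
  · rw [← hθ, mul_zero]
    refine (sum_eq_zero fun s hs => ?_).le
    by_contra hne
    have hs' : ∀ t, s t ≠ θ := fun t ht => hne (prod_eq_zero (mem_univ t) (by rw [ht, ← hθ]))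
    have hemp : empDist s θ = 0 := by simp [empDist, hs']
    have := (mem_filter.1 hs).2
    rw [hemp] at this
    norm_num at this
    linarith
  · calc _ ≤ ∑ s ∈ univ.filter (fun s : Fin k → Θ => ε / 4 ≤ empDist s θ - pstar θ) ∪
            univ.filter (fun s : Fin k → Θ => empDist s θ - pstar θ ≤ -(ε / 4)),
            ∏ t, pstar (s t) := by
          refine sum_le_sum_of_subset_of_nonneg (fun s hs => ?_) fun s _ _ => hw s
          simpa [le_abs, le_neg] using hs
      _ ≤ _ := by
          rw [← sum_union_inter]
          exact le_add_of_nonneg_right (sum_nonneg fun s _ => hw s)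
      _ ≤ Real.exp (-L) * pstar θ + Real.exp (-L) * pstar θ :=
          add_le_add
            (upper_tail_le hkpos hp0 hp1 hθ (by positivity) (by linarith) hL hkL)
            (lower_tail_le hkpos hp0 hp1 hθ (by positivity) hL hkL)
      _ ≤ δ / 2 * pstar θ := by nlinarith
end
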